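/- arXiv:math/9803067 — 2 statements merged into one kernel-verified Lean document; each statement's English description precedes it below -/
import Mathlib

section
/- Let w = (1+i)/2. Then 2·Li₂((1+i)/8) = 5·(2·Li₂(i/2) − (Log w)²) + 8·Li₂(−i), where (1+i)/8 = −w⁵ and i/2 = w². -/
/-!
The identity is obtained from three functional equations of the dilogarithm:

* duplication `Li₂(z²) = 2 (Li₂ z + Li₂ (-z))` for `‖z‖ ≤ 1`, read off the series (`Li_two_sq`);
* Landen `Li₂ z + Li₂ (z / (z - 1)) = -log² (1 - z) / 2` for `‖z‖ ≤ 1`, `Re z ≤ 1/2` (`landen`);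
* the five-term relation with one of its two variables equal to `1/2` (`five_term_half`).

The last two hold because the difference of their sides has derivative zero, by
`z · Li₂' z = -log (1 - z)`; Landen's identity is extended to `Re z = 1/2`, where
`z / (z - 1)` is on the unit circle, by continuity of `Li₂` on the closed disc.

Put `q = 2 - i` and `w = (1 + i) / 2`. Modulo products of logarithms and `π²`, Landen sends
`(1 + i) / 8` to `-1 / q²`, whose dilogarithm is `2 (Li₂ (i / q) + Li₂ (-i / q))`. Landen sends
`-i / q` to `i / 2` and `i / q` to `(1 - i) / 4 = (1/2) · conj w`. The five-term relation at
`(conj w, 1/2)` expresses `Li₂ ((1 - i) / 4)` through `Li₂ (conj w)`, `Li₂ (-i / q)` and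
`Li₂ (1 / q)`, and these reduce to `Li₂ (i / 2)` and `Li₂ (-i)` by Landen and duplication.
The value of `Li₂ (1/2)` and the sum `Li₂ (conj w) + Li₂ w` come from `Li₂ 1 = π² / 6`, because
Landen sends `1/2`, `w`, `conj w` to `-1`, `-i`, `i`. The elementary terms are
polynomials in `log 2`, `π` and `log q`, and they cancel.
-/

open Complex

/-- The polylogarithm `Li n z = ∑_{k ≥ 1} z^k / k^n`. -/
noncomputable def Li (n : ℕ) (z : ℂ) : ℂ := ∑' k : ℕ, z ^ (k + 1) / ((k + 1 : ℕ) : ℂ) ^ n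

/-! ### The dilogarithm series -/

lemma norm_Li_two_term_le {z : ℂ} (hz : ‖z‖ ≤ 1) (k : ℕ) :
    ‖z ^ (k + 1) / ((k + 1 : ℕ) : ℂ) ^ 2‖ ≤ 1 / ((k + 1 : ℕ) : ℝ) ^ 2 := by
  rw [norm_div, norm_pow, norm_pow, Complex.norm_natCast]
  gcongr
  exact pow_le_one₀ (norm_nonneg _) hz

lemma summable_one_div_succ_sq : Summable fun k : ℕ => 1 / ((k + 1 : ℕ) : ℝ) ^ 2 :=
  (summable_nat_add_iff 1).2 hasSum_zeta_two.summable

lemma summable_Li_two {z : ℂ} (hz : ‖z‖ ≤ 1) :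
    Summable fun k : ℕ => z ^ (k + 1) / ((k + 1 : ℕ) : ℂ) ^ 2 :=
  Summable.of_norm_bounded summable_one_div_succ_sq (norm_Li_two_term_le hz)

lemma continuousOn_Li_two : ContinuousOn (Li 2) (Metric.closedBall 0 1) := by
  unfold Li
  refine continuousOn_tsum (fun k => by fun_prop) summable_one_div_succ_sq ?_
  intro k z hz
  exact norm_Li_two_term_le (by simpa using hz) k

lemma Li_two_zero : Li 2 0 = 0 := by simp [Li]

lemma Li_two_one : Li 2 1 = (Real.pi : ℂ) ^ 2 / 6 := by
  have h := (hasSum_nat_add_iff' 1).2 hasSum_zeta_two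
  have h2 := Complex.hasSum_ofReal.2 h
  unfold Li
  simpa using h2.tsum_eq

lemma Li_two_sq {z : ℂ} (hz : ‖z‖ ≤ 1) : Li 2 (z ^ 2) = 2 * (Li 2 z + Li 2 (-z)) := by
  have h1 := summable_Li_two hz
  have h2 := summable_Li_two (z := -z) (by simpa using hz)
  -- Only the odd indices, that is the even powers of `z`, survive.
  have hodd : ∀ k : ℕ, z ^ (2 * k + 1) / ((2 * k + 1 : ℕ) : ℂ) ^ 2 +
      (-z) ^ (2 * k + 1) / ((2 * k + 1 : ℕ) : ℂ) ^ 2 = 0 := by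
    intro k
    rw [Odd.neg_pow ⟨k, rfl⟩]; ring
  have heven : ∀ k : ℕ, z ^ (2 * k + 1 + 1) / ((2 * k + 1 + 1 : ℕ) : ℂ) ^ 2 +
      (-z) ^ (2 * k + 1 + 1) / ((2 * k + 1 + 1 : ℕ) : ℂ) ^ 2 =
      (z ^ 2) ^ (k + 1) / ((k + 1 : ℕ) : ℂ) ^ 2 / 2 := by
    intro k
    have hk : (k : ℂ) + 1 ≠ 0 := by exact_mod_cast Nat.succ_ne_zero k
    have e : ((2 * k + 1 + 1 : ℕ) : ℂ) = 2 * ((k : ℂ) + 1) := by push_cast; ring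
    rw [Even.neg_pow ⟨k + 1, by ring⟩, ← pow_mul, e, show 2 * (k + 1) = 2 * k + 1 + 1 by ring]
    push_cast
    field_simp
    ring
  have hs := tsum_even_add_odd
    (f := fun k : ℕ => z ^ (k + 1) / ((k + 1 : ℕ) : ℂ) ^ 2 +
      (-z) ^ (k + 1) / ((k + 1 : ℕ) : ℂ) ^ 2)
    (by simp only [hodd]; exact summable_zero)
    (by
      simp only [heven]
      exact (summable_Li_two (z := z ^ 2)
        (by rw [norm_pow]; exact pow_le_one₀ (norm_nonneg _) hz)).div_const 2)
  have ho : ∑' k : ℕ, (z ^ (2 * k + 1) / ((2 * k + 1 : ℕ) : ℂ) ^ 2 +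
      (-z) ^ (2 * k + 1) / ((2 * k + 1 : ℕ) : ℂ) ^ 2) = 0 := by
    rw [tsum_congr hodd, tsum_zero]
  rw [ho, tsum_congr heven, tsum_div_const, h1.tsum_add h2] at hs
  unfold Li
  linear_combination 2 * hs

/-- The derivative of `Li 2` on the unit disc: the continuous extension of
`-log (1 - z) / z` to `z = 0`. -/
noncomputable def dLi (z : ℂ) : ℂ := if z = 0 then 1 else -log (1 - z) / z

lemma hasDerivAt_Li_two {z : ℂ} (hz : ‖z‖ < 1) : HasDerivAt (Li 2) (dLi z) z := by
  obtain ⟨r, hr, hr1⟩ := exists_between hz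
  have hr0 : 0 ≤ r := (norm_nonneg z).trans hr.le
  have key : HasDerivAt (Li 2) (∑' k : ℕ, z ^ k / ((k : ℂ) + 1)) z := by
    unfold Li
    refine hasDerivAt_tsum_of_isPreconnected (u := fun k : ℕ => r ^ k) (t := Metric.ball 0 r)
      (g' := fun (k : ℕ) y => y ^ k / ((k : ℂ) + 1)) (y₀ := 0)
      (summable_geometric_of_lt_one hr0 hr1) Metric.isOpen_ball
      (convex_ball _ _).isPreconnected ?_ ?_ ?_ ?_ ?_
    · intro k y _
      have h := (hasDerivAt_pow (k + 1) y).div_const (((k + 1 : ℕ) : ℂ) ^ 2)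
      refine h.congr_deriv ?_
      have : ((k : ℂ) + 1) ≠ 0 := by exact_mod_cast Nat.succ_ne_zero k
      rw [Nat.add_sub_cancel]
      push_cast
      field_simp
    · intro k y hy
      have hy' : ‖y‖ ≤ r := by simpa using (Metric.mem_ball.1 hy).le
      rw [norm_div, norm_pow]
      have h1 : (1 : ℝ) ≤ ‖(k : ℂ) + 1‖ := by
        have : ((k : ℂ) + 1) = ((k + 1 : ℕ) : ℂ) := by push_cast; ring
        rw [this, Complex.norm_natCast]
        exact_mod_cast Nat.succ_le_succ (Nat.zero_le k)
      calc ‖y‖ ^ k / ‖(k : ℂ) + 1‖ ≤ ‖y‖ ^ k := div_le_self (by positivity) h1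
        _ ≤ r ^ k := by gcongr
    · simpa using (norm_nonneg z).trans_lt hr
    · exact summable_Li_two (by simp)
    · simpa using hr
  refine key.congr_deriv ?_
  symm
  unfold dLi
  split_ifs with h0
  · subst h0
    rw [tsum_eq_single 0 (fun k hk => by simp [hk])]
    simp
  · rw [div_eq_iff h0, ← tsum_mul_right]
    have h := (hasSum_nat_add_iff' 1).2 (Complex.hasSum_taylorSeries_neg_log hz)
    simp only [Finset.range_one, Finset.sum_singleton, Nat.cast_zero, div_zero, sub_zero] at h
    rw [← h.tsum_eq]
    refine tsum_congr fun k => ?_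
    push_cast
    ring

/-! ### Logarithms on the right half-plane -/

lemma log_mul_of_re_pos {a b : ℂ} (ha : 0 < a.re) (hb : 0 < b.re) :
    log (a * b) = log a + log b := by
  have ha' := abs_lt.1 (Complex.abs_arg_lt_pi_div_two_iff.2 (Or.inl ha))
  have hb' := abs_lt.1 (Complex.abs_arg_lt_pi_div_two_iff.2 (Or.inl hb))
  refine Complex.log_mul ?_ ?_ ⟨by linarith, by linarith⟩
  · rintro rfl; simp at ha
  · rintro rfl; simp at hb

lemma log_inv_of_re_pos {a : ℂ} (ha : 0 < a.re) : log a⁻¹ = -log a := by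
  refine Complex.log_inv _ fun h => ?_
  have := Complex.arg_eq_pi_iff.1 h
  linarith [this.1]

lemma log_div_of_re_pos {a b : ℂ} (ha : 0 < a.re) (hb : 0 < b.re) :
    log (a / b) = log a - log b := by
  have hb0 : b ≠ 0 := by rintro rfl; simp at hb
  rw [div_eq_mul_inv, log_mul_of_re_pos ha, log_inv_of_re_pos hb, sub_eq_add_neg]
  rw [Complex.inv_re]
  exact div_pos hb (Complex.normSq_pos.2 hb0)

/-! ### Functional equations -/

/-- The left side minus the right side of Landen's identity. -/
noncomputable def landenDefect (z : ℂ) : ℂ :=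
  Li 2 z + Li 2 (z / (z - 1)) + log (1 - z) ^ 2 / 2

lemma norm_landen_le {z : ℂ} (hre : z.re ≤ 1 / 2) : ‖z / (z - 1)‖ ≤ 1 := by
  rw [norm_div]
  refine div_le_one_of_le₀ ?_ (norm_nonneg _)
  rw [Complex.norm_def, Complex.norm_def]
  apply Real.sqrt_le_sqrt
  simp [Complex.normSq_apply]
  nlinarith

lemma norm_landen_lt {z : ℂ} (hre : z.re < 1 / 2) : ‖z / (z - 1)‖ < 1 := by
  have h1 : z - 1 ≠ 0 := fun h => by
    have := congrArg Complex.re h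
    simp at this; linarith
  rw [norm_div, div_lt_one (norm_pos_iff.2 h1), Complex.norm_def, Complex.norm_def]
  apply Real.sqrt_lt_sqrt (Complex.normSq_nonneg _)
  simp [Complex.normSq_apply]
  nlinarith

lemma hasDerivAt_landenDefect {z : ℂ} (hz : ‖z‖ < 1) (hre : z.re < 1 / 2) :
    HasDerivAt landenDefect 0 z := by
  have h1 : 0 < (1 - z).re := by simp; linarith
  have h10 : 1 - z ≠ 0 := by intro h; simp [h] at h1
  have h11 : z - 1 ≠ 0 := by intro h; apply h10; linear_combination -h
  have d1 := hasDerivAt_Li_two hz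
  have dm : HasDerivAt (fun z : ℂ => z / (z - 1)) (-1 / (z - 1) ^ 2) z := by
    refine ((hasDerivAt_id z).div ((hasDerivAt_id z).sub_const 1) h11).congr_deriv ?_
    simp
  have d2 := (hasDerivAt_Li_two (norm_landen_lt hre)).comp z dm
  have d3 := (((hasDerivAt_id z).const_sub 1).clog (Or.inl h1)).pow 2 |>.div_const 2
  have h : HasDerivAt landenDefect _ z := (d1.add d2).add d3
  refine h.congr_deriv ?_
  have hl : log (1 - z / (z - 1)) = - log (1 - z) := by
    rw [← log_inv_of_re_pos h1]
    congr 1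
    field_simp
    ring
  by_cases h0 : z = 0
  · subst h0; simp [dLi]
  · have h2 : z / (z - 1) ≠ 0 := div_ne_zero h0 h11
    simp only [dLi, if_neg h0, if_neg h2, hl, id]
    have : (1 - z) = -(z - 1) := by ring
    generalize log (1 - z) = L
    rw [this]
    field_simp
    ring

lemma landen {z : ℂ} (hz : ‖z‖ ≤ 1) (hre : z.re ≤ 1 / 2) :
    Li 2 z + Li 2 (z / (z - 1)) = -log (1 - z) ^ 2 / 2 := by
  have hseg : ∀ t ∈ Set.Icc (0 : ℝ) 1, ‖(t : ℂ) * z‖ ≤ 1 ∧ ((t : ℂ) * z).re ≤ 1 / 2 := by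
    rintro t ⟨h0, h1⟩
    constructor
    · rw [norm_mul, Complex.norm_real, Real.norm_of_nonneg h0]
      exact mul_le_one₀ h1 (norm_nonneg _) hz
    · simp; nlinarith
  have hcont : ContinuousOn (fun t : ℝ => landenDefect (t * z)) (Set.Icc 0 1) := by
    have hne : ∀ t ∈ Set.Icc (0 : ℝ) 1, (t : ℂ) * z - 1 ≠ 0 := by
      intro t ht h
      have h' := congrArg Complex.re h
      have := (hseg t ht).2
      rw [Complex.sub_re] at h'
      simp only [Complex.one_re, Complex.zero_re] at h'
      linarith
    unfold landenDefect
    refine ContinuousOn.add (ContinuousOn.add ?_ ?_) ?_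
    · exact continuousOn_Li_two.comp (by fun_prop) fun t ht => by simpa using (hseg t ht).1
    · refine continuousOn_Li_two.comp (ContinuousOn.div (by fun_prop) (by fun_prop) hne) ?_
      intro t ht
      simpa using norm_landen_le (hseg t ht).2
    · refine ContinuousOn.div_const (ContinuousOn.pow (ContinuousOn.clog (by fun_prop) ?_) 2) 2
      intro t ht
      refine Or.inl ?_
      have := (hseg t ht).2
      rw [Complex.sub_re, Complex.one_re]
      linarith
  have hder : ∀ t ∈ Set.Ico (0 : ℝ) 1,
      HasDerivWithinAt (fun t : ℝ => landenDefect (t * z)) 0 (Set.Ici t) t := by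
    rintro t ⟨h0, h1⟩
    have a1 : ‖(t : ℂ) * z‖ < 1 := by
      rw [norm_mul, Complex.norm_real, Real.norm_of_nonneg h0]
      nlinarith [norm_nonneg z]
    have a2 : ((t : ℂ) * z).re < 1 / 2 := by simp; nlinarith
    have hm : HasDerivAt (fun t : ℝ => (t : ℂ) * z) (1 * z) t :=
      (Complex.ofRealCLM.hasDerivAt (x := t)).mul_const z
    have h := (hasDerivAt_landenDefect a1 a2).comp t hm
    rw [zero_mul] at h
    exact h.hasDerivWithinAt
  have h := constant_of_has_deriv_right_zero hcont hder 1 (by simp)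
  simp [landenDefect, Li_two_zero] at h
  linear_combination h

/-- The difference of the two sides of the five-term relation, with second variable `1/2`. -/
noncomputable def fiveTermDefect (x : ℂ) : ℂ :=
  Li 2 x + Li 2 (1 / 2) - Li 2 (x / 2) - Li 2 (x / (2 - x)) - Li 2 ((1 - x) / (2 - x))
    - (log (1 - x) - log (2 - x) + log 2) * (-log (2 - x))

lemma hasDerivAt_fiveTermDefect {x : ℂ} (hx : ‖x‖ < 1) : HasDerivAt fiveTermDefect 0 x := by
  have hre : x.re < 1 := (Complex.re_le_norm x).trans_lt hx
  have p1 : 0 < (1 - x).re := by simp; linarith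
  have p2 : 0 < (2 - x).re := by simp; linarith
  have n1 : 1 - x ≠ 0 := by intro h; simp [h] at p1
  have n2 : 2 - x ≠ 0 := by intro h; simp [h] at p2
  have b2 : ‖x / 2‖ < 1 := by rw [norm_div]; norm_num; linarith
  have b3 : ‖x / (2 - x)‖ < 1 := by
    rw [norm_div, div_lt_one (norm_pos_iff.2 n2), Complex.norm_def, Complex.norm_def]
    apply Real.sqrt_lt_sqrt (Complex.normSq_nonneg _)
    simp [Complex.normSq_apply]
    nlinarith
  have b4 : ‖(1 - x) / (2 - x)‖ < 1 := by
    rw [norm_div, div_lt_one (norm_pos_iff.2 n2), Complex.norm_def, Complex.norm_def]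
    apply Real.sqrt_lt_sqrt (Complex.normSq_nonneg _)
    simp [Complex.normSq_apply]
    nlinarith
  have i := hasDerivAt_id x
  have d1 := hasDerivAt_Li_two hx
  have d2 := (hasDerivAt_Li_two b2).comp x (i.div_const 2)
  have m3 : HasDerivAt (fun x : ℂ => x / (2 - x)) (2 / (2 - x) ^ 2) x := by
    refine (i.div (i.const_sub 2) n2).congr_deriv ?_
    simp
  have m4 : HasDerivAt (fun x : ℂ => (1 - x) / (2 - x)) (-1 / (2 - x) ^ 2) x := by
    refine ((i.const_sub 1).div (i.const_sub 2) n2).congr_deriv ?_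
    simp
    ring
  have d3 := (hasDerivAt_Li_two b3).comp x m3
  have d4 := (hasDerivAt_Li_two b4).comp x m4
  have l1 := (i.const_sub 1).clog (Or.inl p1)
  have l2 := (i.const_sub 2).clog (Or.inl p2)
  have h : HasDerivAt fiveTermDefect _ x := ((((d1.add_const (Li 2 (1 / 2))).sub d2).sub d3).sub d4).sub
    (((l1.sub l2).add_const (log 2)).mul l2.neg)
  refine h.congr_deriv ?_
  have e2 : log (1 - x / 2) = log (2 - x) - log 2 := by
    rw [← log_div_of_re_pos p2 (by simp)]
    congr 1
    field_simp
  have e3 : log (1 - x / (2 - x)) = log 2 + log (1 - x) - log (2 - x) := by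
    rw [← log_mul_of_re_pos (by simp) p1, ← log_div_of_re_pos (by simp at p1 ⊢; linarith) p2]
    congr 1
    field_simp
    ring
  have e4 : log (1 - (1 - x) / (2 - x)) = - log (2 - x) := by
    rw [← log_inv_of_re_pos p2]
    congr 1
    field_simp
    ring
  have h4 : (1 - x) / (2 - x) ≠ 0 := div_ne_zero n1 n2
  by_cases h0 : x = 0
  · subst h0
    have : log (1 - 1 / 2 : ℂ) = - log 2 := by
      rw [← log_inv_of_re_pos (by simp)]; norm_num
    simp [dLi] at this ⊢
    rw [this]
    ring
  · have h2 : x / 2 ≠ 0 := div_ne_zero h0 two_ne_zero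
    have h3 : x / (2 - x) ≠ 0 := div_ne_zero h0 n2
    simp only [dLi, if_neg h0, if_neg h2, if_neg h3, if_neg h4, e2, e3, e4, id, Pi.sub_apply]
    generalize log (1 - x) = A
    generalize log (2 - x) = B
    field_simp
    ring

lemma five_term_half {x : ℂ} (hx : ‖x‖ < 1) : fiveTermDefect x = 0 := by
  have h := (convex_ball (0 : ℂ) 1).is_const_of_fderivWithin_eq_zero (𝕜 := ℂ)
    (f := fiveTermDefect) (x := x) (y := 0)
    (fun y hy => (hasDerivAt_fiveTermDefect
      (by simpa using hy)).differentiableAt.differentiableWithinAt)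
    (fun y hy => by
      rw [fderivWithin_of_isOpen Metric.isOpen_ball hy]
      have := (hasDerivAt_fiveTermDefect (by simpa using hy)).hasFDerivAt.fderiv
      rw [this]; ext; simp)
    (by simpa using hx) (by simp)
  rw [h]
  simp [fiveTermDefect, Li_two_zero]

/-! ### Special values -/

lemma Li_two_neg_one : Li 2 (-1) = -(Real.pi : ℂ) ^ 2 / 12 := by
  have h := Li_two_sq (z := 1) (by simp)
  rw [one_pow, Li_two_one] at h
  linear_combination -h / 2

lemma log_one_add_I : log (1 + I) = log 2 / 2 + Real.pi / 4 * I := by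
  have h : log ((1 + I) * (1 + I)) = log (2 * I) := by
    congr 1; linear_combination Complex.I_sq
  rw [log_mul_of_re_pos (by simp) (by simp)] at h
  have h2 : log (2 * I) = log 2 + log I := by
    have := Complex.log_ofReal_mul (r := 2) (by norm_num) Complex.I_ne_zero
    rw [Complex.ofReal_log (by norm_num)] at this
    simpa using this
  rw [h2, Complex.log_I] at h
  linear_combination h / 2

lemma log_one_sub_I : log (1 - I) = log 2 / 2 - Real.pi / 4 * I := by
  have h : log ((1 + I) * (1 - I)) = log 2 := by
    congr 1; linear_combination -Complex.I_sq
  rw [log_mul_of_re_pos (by simp) (by simp), log_one_add_I] at h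
  linear_combination h

/-- Landen's identity with the transformed point `v = z / (z - 1)` supplied, and division-free
hypotheses suited to explicit numbers. -/
lemma landen' {z v : ℂ} (hz : Complex.normSq z ≤ 1) (hre : z.re ≤ 1 / 2)
    (hv : z = v * (z - 1)) : Li 2 z + Li 2 v = -log (1 - z) ^ 2 / 2 := by
  have h1 : z - 1 ≠ 0 := fun h => by
    have := congrArg Complex.re h
    simp at this; linarith
  rw [show v = z / (z - 1) by rw [eq_div_iff h1, ← hv]]
  refine landen ?_ hre
  rw [Complex.norm_def]
  exact Real.sqrt_le_one.2 hz

theorem dilog_ladder_p5 :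
    2 * Li 2 ((1 + I) / 8) =
      5 * (2 * Li 2 (I / 2) - (Complex.log ((1 + I) / 2)) ^ 2) + 8 * Li 2 (-I) := by
  have hI := Complex.I_sq
  have lp := log_one_add_I
  have lm := log_one_sub_I
  set P : ℂ := (Real.pi : ℂ) with hP
  have l4 : log (4 : ℂ) = 2 * log 2 := by
    rw [show (4 : ℂ) = 2 * 2 by norm_num, log_mul_of_re_pos (by simp) (by simp)]; ring
  have l8 : log (8 : ℂ) = 3 * log 2 := by
    rw [show (8 : ℂ) = 4 * 2 by norm_num, log_mul_of_re_pos (by simp) (by simp), l4]; ring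
  have lw : log ((1 + I) / 2) = log (1 + I) - log 2 :=
    log_div_of_re_pos (by simp) (by simp)
  have lw' : log ((1 - I) / 2) = log (1 - I) - log 2 :=
    log_div_of_re_pos (by simp) (by simp)
  have l3 : log (3 + I) = log (1 + I) + log (2 - I) := by
    rw [← log_mul_of_re_pos (by simp) (by simp)]
    congr 1; linear_combination hI
  -- `1 - (1 + i) / 8 = q² (1 + i) / 8` with `q = 2 - i`.
  have lx : log (1 - (1 + I) / 8) = log (1 + I) + 2 * log (2 - I) - 3 * log 2 := by
    rw [show 1 - (1 + I) / 8 = (3 + I) * (2 - I) / 8 by linear_combination hI / 8,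
      log_div_of_re_pos (by simp; norm_num) (by simp), log_mul_of_re_pos (by simp) (by simp),
      l3, l8]
    ring
  have hq : (2 - I) ≠ 0 := fun h => by simpa using congrArg Complex.re h
  have la : log (1 - (-1 + 2 * I) / 5) = log 2 + log (1 - I) - log (2 - I) := by
    rw [← log_mul_of_re_pos (by simp) (by simp), ← log_div_of_re_pos (by simp) (by simp)]
    congr 1; field_simp; linear_combination 2 * hI
  have lb : log (1 - -((-1 + 2 * I) / 5)) = log 2 - log (2 - I) := by
    rw [← log_div_of_re_pos (by simp) (by simp)]
    congr 1; field_simp; linear_combination -2 * hI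
  have lc : log (1 - (2 + I) / 5) = log (1 - I) - log (2 - I) := by
    rw [← log_div_of_re_pos (by simp) (by simp)]
    congr 1; field_simp; linear_combination hI
  -- `(-1 + 2 * I) / 5 = i / q`, `(2 + I) / 5 = 1 / q` and `(1 - I) / 2 = conj w`.
  have E1 := landen' (z := (1 + I) / 8) (v := ((-1 + 2 * I) / 5) ^ 2)
    (by simp [Complex.normSq_apply]; norm_num) (by simp; norm_num)
    (by grind)
  have E2 := Li_two_sq (z := (-1 + 2 * I) / 5) (by
    rw [Complex.norm_def]; apply Real.sqrt_le_one.2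
    simp [Complex.normSq_apply]; norm_num)
  have E3 := landen' (z := (-1 + 2 * I) / 5) (v := (1 - I) / 4)
    (by simp [Complex.normSq_apply]; norm_num) (by simp; norm_num)
    (by grind)
  have E4 := landen' (z := -((-1 + 2 * I) / 5)) (v := I / 2)
    (by simp [Complex.normSq_apply]; norm_num) (by simp; norm_num)
    (by grind)
  have E5 := five_term_half (x := (1 - I) / 2) (by
    rw [Complex.norm_def, Real.sqrt_lt' one_pos]
    simp [Complex.normSq_apply]; norm_num)
  have E6 := landen' (z := (2 + I) / 5) (v := -((1 + I) / 2))
    (by simp [Complex.normSq_apply]; norm_num) (by simp; norm_num)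
    (by grind)
  have E7 := Li_two_sq (z := (1 + I) / 2) (by
    rw [Complex.norm_def]; apply Real.sqrt_le_one.2
    simp [Complex.normSq_apply]; norm_num)
  have E8 := landen' (z := (1 + I) / 2) (v := -I)
    (by simp [Complex.normSq_apply]; norm_num) (by simp)
    (by grind)
  have E9 := landen' (z := (1 - I) / 2) (v := I)
    (by simp [Complex.normSq_apply]; norm_num) (by simp)
    (by grind)
  have E10 := Li_two_sq (z := I) (by simp)
  have E11 := landen' (z := 1 / 2) (v := -1)
    (by simp [Complex.normSq_apply]; norm_num) (by simp) (by norm_num)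
  unfold fiveTermDefect at E5
  rw [hI, Li_two_neg_one] at E10
  rw [Li_two_neg_one] at E11
  have hw : ((1 + I) / 2) ^ 2 = I / 2 := by linear_combination hI / 4
  rw [hw] at E7
  have s1 : (1 - I) / 2 / 2 = (1 - I) / 4 := by ring
  have t2 : 2 - (1 - I) / 2 = (3 + I) / 2 := by ring
  have hn3 : (3 + I) ≠ 0 := fun h => by simpa using congrArg Complex.re h
  have s3 : (1 - I) / 2 / ((3 + I) / 2) = -((-1 + 2 * I) / 5) := by
    field_simp; linear_combination 2 * hI
  have t1 : 1 - (1 - I) / 2 = (1 + I) / 2 := by ring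
  have s4 : (1 + I) / 2 / ((3 + I) / 2) = (2 + I) / 5 := by
    field_simp; linear_combination -hI
  have t3 : 1 - (1 + I) / 2 = (1 - I) / 2 := by ring
  have lh : log (1 - 1 / 2 : ℂ) = -log 2 := by
    rw [← log_inv_of_re_pos (by simp)]; norm_num
  have l32 : log ((3 + I) / 2) = log (3 + I) - log 2 :=
    log_div_of_re_pos (by simp) (by simp)
  rw [t1, t2, s1, s3, s4, l32, l3, lw, lp] at E5
  rw [lx, lp] at E1
  rw [la, lm] at E3
  rw [lb] at E4
  rw [lc, lm] at E6
  rw [t3, lw', lm] at E8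
  rw [t1, lw, lp] at E9
  rw [lh] at E11
  rw [lw, lp]
  rw [← hP] at E10 E11
  linear_combination 2 * E1 - 2 * E2 - 4 * E3 - 8 * E4 - 4 * E5 - 4 * E6 - 2 * E7 - 4 * E8
    + 4 * E9 + 2 * E10 + 4 * E11 + P ^ 2 / 2 * hI
end

section
/- (4/9)·Re Li₃(i/√8) − 8·Re Li₃(−i/√2) = (49/72)·ζ(3) + (log³2)/12 − (π² log 2)/18. -/
/-!
Terms of even index of `Li 3 w` contribute to the real part `1/8 * Li₃(w²)` when `w` is purely
imaginary, and those of odd index nothing, so the claim is the real ladder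
`Li₃(-1/8) - 18 Li₃(-1/2) = 49/4 ζ(3) - π² log 2 + 3/2 log³ 2`.

It is a special value of a one-variable form of Kummer's trilogarithm equation
(`trilog_kummer`), whose arguments are `±(1-z)/(1+z)`, `-z/(1-z)`, `z/(1+z)`, `-z²/(1-z²)`.
At `z = 1/3` these are `±1/2`, `-1/2`, `1/4`, `-1/8`; duplication (`P_dup`) turns `Li₃(1/4)` into
`4 Li₃(1/2) + 4 Li₃(-1/2)`, and `Li₃(1/2)` is known (`P_three_half`), from the trilogarithm
Landen equation (`trilog_landen`) at `z = 1/2`.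

Every functional equation is proved by the same scheme, `eq_of_deriv`: both sides agree at `0`, are
continuous on `[0, b]`, and have the same derivative on `(0, b)`. Since
`d/dx Liₙ₊₁(g) = Liₙ(g) g'/g`, the equality of derivatives for weight 3 follows from the dilogarithm
equations `landen_neg`, `landen_pos`, `euler_reflection`, `chi_reflection`, and for weight 2 from
`Li₁(x) = -log (1 - x)`.
-/

open Complex

/-- `ζ(3) = ∑_{k ≥ 1} 1/k³`. -/
noncomputable def zeta3 : ℝ := ∑' k : ℕ, (1 : ℝ) / ((k + 1 : ℕ) : ℝ) ^ 3

open Set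

/-! ### The real polylogarithm series -/
/-- The real polylogarithm `Liₙ(x) = ∑_{k ≥ 1} x^k / k^n`, meaningful for `|x| ≤ 1` when `n ≥ 2` and
for `|x| < 1` when `n = 1`. -/
noncomputable def P (n : ℕ) (x : ℝ) : ℝ := ∑' k : ℕ, x ^ (k + 1) / ((k + 1 : ℕ) : ℝ) ^ n

lemma summable_bound {n : ℕ} (hn : 2 ≤ n) :
    Summable fun k : ℕ => (1 : ℝ) / ((k + 1 : ℕ) : ℝ) ^ n :=
  (summable_nat_add_iff (f := fun k : ℕ => (1 : ℝ) / (k : ℝ) ^ n) 1).2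
    (Real.summable_one_div_nat_pow.2 (by omega))

lemma term_bound (n : ℕ) {x : ℝ} (hx : |x| ≤ 1) (k : ℕ) :
    ‖x ^ (k + 1) / ((k + 1 : ℕ) : ℝ) ^ n‖ ≤ 1 / ((k + 1 : ℕ) : ℝ) ^ n := by
  rw [norm_div, norm_pow, norm_pow, Real.norm_natCast, Real.norm_eq_abs]
  gcongr
  exact pow_le_one₀ (abs_nonneg x) hx

lemma P_summable {n : ℕ} (hn : 2 ≤ n) {x : ℝ} (hx : |x| ≤ 1) :
    Summable fun k : ℕ => x ^ (k + 1) / ((k + 1 : ℕ) : ℝ) ^ n :=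
  .of_norm_bounded (summable_bound hn) (term_bound n hx)

lemma P_continuousOn {n : ℕ} (hn : 2 ≤ n) : ContinuousOn (P n) {x | |x| ≤ 1} :=
  continuousOn_tsum (fun k => by fun_prop) (summable_bound hn) fun k x hx => term_bound n hx k

lemma P_zero (n : ℕ) : P n 0 = 0 := by simp [P]

lemma P_one_left {x : ℝ} (hx : |x| < 1) : P 1 x = -Real.log (1 - x) := by
  rw [← (Real.hasSum_pow_div_log_of_abs_lt_one hx).tsum_eq]
  simp [P]

lemma P_hasDerivAt (n : ℕ) {x : ℝ} (hx : |x| < 1) (h0 : x ≠ 0) :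
    HasDerivAt (P (n + 1)) (P n x / x) x := by
  obtain ⟨r, hxr, hr⟩ := exists_between hx
  have hr0 : 0 ≤ r := (abs_nonneg x).trans hxr.le
  have key := hasDerivAt_tsum_of_isPreconnected (𝕜 := ℝ) (F := ℝ) (u := fun k : ℕ => r ^ k)
    (g := fun (k : ℕ) (y : ℝ) => y ^ (k + 1) / ((k + 1 : ℕ) : ℝ) ^ (n + 1))
    (g' := fun (k : ℕ) (y : ℝ) => y ^ k / ((k + 1 : ℕ) : ℝ) ^ n)
    (t := Ioo (-r) r) (y₀ := 0) (y := x) (summable_geometric_of_lt_one hr0 hr) isOpen_Ioo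
    isPreconnected_Ioo ?_ ?_ ?_ ?_ (abs_lt.1 hxr)
  · refine HasDerivAt.congr_deriv (f := P (n + 1)) key ?_
    rw [P]
    rw [← tsum_div_const]
    congr 1 with k
    field_simp
    ring
  · intro k y _
    refine ((hasDerivAt_pow (k + 1) y).div_const (((k + 1 : ℕ) : ℝ) ^ (n + 1))).congr_deriv ?_
    have : ((k + 1 : ℕ) : ℝ) ≠ 0 := by positivity
    rw [Nat.add_sub_cancel]
    field_simp
    ring
  · intro k y hy
    rw [norm_div, norm_pow, norm_pow, Real.norm_natCast, Real.norm_eq_abs]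
    have h1 : |y| ^ k ≤ r ^ k := pow_le_pow_left₀ (abs_nonneg y) (abs_lt.2 hy).le k
    exact (div_le_self (by positivity) (one_le_pow₀ (by simp))).trans h1
  · have := (abs_nonneg x).trans_lt hxr
    exact ⟨by linarith, this⟩
  · simp

lemma P_comp (n : ℕ) {g : ℝ → ℝ} {g' x : ℝ} (hg : HasDerivAt g g' x) (h1 : |g x| < 1)
    (h0 : g x ≠ 0) : HasDerivAt (fun y => P (n + 1) (g y)) (P n (g x) / g x * g') x :=
  (P_hasDerivAt n h1 h0).comp x hg

lemma P_comp_continuousOn {n : ℕ} (hn : 2 ≤ n) {g : ℝ → ℝ} {s : Set ℝ} (hg : ContinuousOn g s)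
    (h1 : ∀ x ∈ s, |g x| ≤ 1) : ContinuousOn (fun y => P n (g y)) s :=
  (P_continuousOn hn).comp hg h1

/-- A series supported on the odd indices has the sum of its odd-indexed part. -/
lemma hasSum_of_odd {f : ℕ → ℝ} {g : ℕ → ℝ} {s : ℝ} (he : ∀ k, f (2 * k) = 0)
    (ho : ∀ k, f (2 * k + 1) = g k) (hg : HasSum g s) : HasSum f s := by
  have h1 : HasSum (fun k => f (2 * k)) 0 := by simp [he, hasSum_zero]
  have h2 : HasSum (fun k => f (2 * k + 1)) s := by simpa [ho] using hg
  simpa using h1.even_add_odd h2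

/-- Duplication formula: in `Liₙ(x) + Liₙ(-x)` only the even powers of `x` survive. -/
lemma P_dup {n : ℕ} (hn : 2 ≤ n) {x : ℝ} (hx : |x| ≤ 1) :
    P n x + P n (-x) = 2 / 2 ^ n * P n (x ^ 2) := by
  have hx2 : |x ^ 2| ≤ 1 := by rw [abs_pow]; exact pow_le_one₀ (abs_nonneg x) hx
  have h1 := (P_summable hn hx).hasSum.add (P_summable hn (x := -x) (by simpa using hx)).hasSum
  refine h1.unique (hasSum_of_odd ?_ ?_ ((P_summable hn hx2).hasSum.mul_left (2 / 2 ^ n)))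
  · intro k
    rw [Odd.neg_pow ⟨k, rfl⟩]; ring
  · intro k
    rw [Even.neg_pow ⟨k + 1, by ring⟩]
    have : ((2 * k + 1 + 1 : ℕ) : ℝ) = 2 * ((k + 1 : ℕ) : ℝ) := by push_cast; ring
    rw [this, mul_pow, ← pow_mul]
    have : ((k + 1 : ℕ) : ℝ) ≠ 0 := by positivity
    field_simp
    ring

/-- On the imaginary axis, `Re Li₃(w) = Li₃(w²) / 8`; here `w² = -t`. -/
lemma Li_re {w : ℂ} {t : ℝ} (hw : w ^ 2 = -(t : ℂ)) (hre : w.re = 0) (h1 : ‖w‖ ≤ 1) (ht : |t| ≤ 1) :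
    (Li 3 w).re = 1 / 8 * P 3 (-t) := by
  have hs : Summable fun k : ℕ => w ^ (k + 1) / ((k + 1 : ℕ) : ℂ) ^ 3 := by
    refine .of_norm_bounded (summable_bound (n := 3) (by norm_num)) fun k => ?_
    rw [norm_div, norm_pow, norm_pow, Complex.norm_natCast]
    gcongr
    exact pow_le_one₀ (norm_nonneg w) h1
  have hq (k : ℕ) : w ^ (2 * k) = (((-t) ^ k : ℝ) : ℂ) := by rw [pow_mul, hw]; push_cast; rfl
  refine (Complex.hasSum_re hs.hasSum).unique (hasSum_of_odd ?_ ?_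
    ((P_summable (n := 3) (by norm_num) (x := -t) (by simpa using ht)).hasSum.mul_left (1 / 8)))
  · intro k
    rw [pow_succ, hq, ← Complex.ofReal_natCast, ← Complex.ofReal_pow, Complex.div_ofReal_re,
      Complex.re_ofReal_mul, hre]
    simp
  · intro k
    rw [show 2 * k + 1 + 1 = 2 * (k + 1) by ring, hq, ← Complex.ofReal_natCast,
      ← Complex.ofReal_pow, Complex.div_ofReal_re, Complex.ofReal_re]
    push_cast
    field_simp
    ring

lemma P_two_one : P 2 1 = Real.pi ^ 2 / 6 := by
  have := (hasSum_nat_add_iff' (f := fun n : ℕ => (1 : ℝ) / (n : ℝ) ^ 2) 1).2 hasSum_zeta_two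
  simpa [P] using this.tsum_eq

lemma P_two_neg_one : P 2 (-1) = -(Real.pi ^ 2 / 12) := by
  have := P_dup (n := 2) le_rfl (x := 1) (by simp)
  norm_num [P_two_one] at this
  linarith

lemma P_three_one : P 3 1 = zeta3 := by simp [P, zeta3]

lemma P_three_neg_one : P 3 (-1) = -(3 / 4) * zeta3 := by
  have := P_dup (n := 3) (by norm_num) (x := 1) (by simp)
  norm_num [P_three_one] at this
  linarith

/-! ### Proving functional equations by differentiation -/

lemma eq_of_deriv {F R F' R' : ℝ → ℝ} {b : ℝ} (hb : 0 < b) (hF : ContinuousOn F (Icc 0 b))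
    (hR : ContinuousOn R (Icc 0 b)) (h0 : F 0 = R 0)
    (dF : ∀ x ∈ Ioo 0 b, HasDerivAt F (F' x) x) (dR : ∀ x ∈ Ioo 0 b, HasDerivAt R (R' x) x)
    (h : ∀ x ∈ Ioo 0 b, F' x = R' x) : F b = R b := by
  obtain ⟨c, hc, h'⟩ := exists_hasDerivAt_eq_slope (fun x => F x - R x) (fun x => F' x - R' x) hb
    (hF.sub hR) fun x hx => (dF x hx).sub (dR x hx)
  rw [h c hc, sub_self, eq_comm, div_eq_zero_iff] at h'
  rcases h' with h' | h' <;> linarith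

/-- The product `log x * u x` extends continuously to `0` when `u` is differentiable with `u 0 = 0`;
the extended value `0` agrees with the convention `log 0 = 0`. -/
lemma log_mul_continuousOn {b : ℝ} {u : ℝ → ℝ} (hu0 : u 0 = 0)
    (hu : ∀ x ∈ Icc 0 b, DifferentiableAt ℝ u x) :
    ContinuousOn (fun x => Real.log x * u x) (Icc 0 b) := by
  have : (fun x => Real.log x * u x) = fun x => (x * Real.log x) * dslope u 0 x := by
    -- `u x = x * dslope u 0 x`, and `x * log x` is continuous
    ext x
    have := sub_smul_dslope u 0 x
    simp only [sub_zero, hu0, smul_eq_mul] at this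
    rw [← this]; ring
  rw [this]
  refine Real.continuous_mul_log.continuousOn.mul fun x hx => ContinuousAt.continuousWithinAt ?_
  rcases eq_or_ne x 0 with rfl | h
  · exact continuousAt_dslope_same.2 (hu 0 hx)
  · exact (continuousAt_dslope_of_ne h).2 (hu x hx).continuousAt

/-! ### Derivatives and bounds for the arguments -/

lemma dlog_sub {x : ℝ} (hx : x < 1) :
    HasDerivAt (fun y => Real.log (1 - y)) (-1 / (1 - x)) x :=
  ((hasDerivAt_id x).const_sub 1).log (by simp; linarith)

lemma dlog_add {x : ℝ} (hx : -1 < x) :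
    HasDerivAt (fun y => Real.log (1 + y)) (1 / (1 + x)) x :=
  ((hasDerivAt_id x).const_add 1).log (by simp; linarith)

lemma dlog {x : ℝ} (hx : 0 < x) : HasDerivAt Real.log (1 / x) x := by
  simpa using Real.hasDerivAt_log hx.ne'

lemma d_g3 {x : ℝ} (hx : x < 1) :
    HasDerivAt (fun y : ℝ => -(y / (1 - y))) (-(1 / (1 - x) ^ 2)) x := by
  have h : 1 - x ≠ 0 := by linarith
  refine HasDerivAt.congr_deriv (((hasDerivAt_id x).div ((hasDerivAt_id x).const_sub 1) h).neg) ?_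
  simp only [id]
  field_simp
  ring

lemma d_g4 {x : ℝ} (hx : -1 < x) :
    HasDerivAt (fun y : ℝ => y / (1 + y)) (1 / (1 + x) ^ 2) x := by
  have h : 1 + x ≠ 0 := by linarith
  refine HasDerivAt.congr_deriv ((hasDerivAt_id x).div ((hasDerivAt_id x).const_add 1) h) ?_
  simp only [id]
  field_simp
  ring

lemma d_g1 {x : ℝ} (hx : -1 < x) :
    HasDerivAt (fun y : ℝ => (1 - y) / (1 + y)) (-(2 / (1 + x) ^ 2)) x := by
  have h : 1 + x ≠ 0 := by linarith
  refine HasDerivAt.congr_deriv (((hasDerivAt_id x).const_sub 1).div ((hasDerivAt_id x).const_add 1) h) ?_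
  simp only [id]
  field_simp
  ring

lemma abs_g3 {x : ℝ} (h0 : 0 ≤ x) (h1 : x < 1 / 2) : |-(x / (1 - x))| < 1 := by
  have h : 0 < 1 - x := by linarith
  rw [abs_neg, abs_of_nonneg (by positivity), div_lt_one h]; linarith

lemma abs_g3_le {x : ℝ} (h0 : 0 ≤ x) (h1 : x ≤ 1 / 2) : |-(x / (1 - x))| ≤ 1 := by
  have h : 0 < 1 - x := by linarith
  rw [abs_neg, abs_of_nonneg (by positivity), div_le_one h]; linarith

lemma abs_g4 {x : ℝ} (h0 : 0 ≤ x) : |x / (1 + x)| < 1 := by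
  rw [abs_of_nonneg (by positivity), div_lt_one (by positivity)]; linarith

lemma abs_g1 {x : ℝ} (h0 : 0 < x) (h1 : x < 1) : |(1 - x) / (1 + x)| < 1 := by
  have h : 0 < 1 - x := by linarith
  rw [abs_of_nonneg (by positivity), div_lt_one (by positivity)]; linarith

lemma abs_g1_le {x : ℝ} (h0 : 0 ≤ x) (h1 : x ≤ 1) : |(1 - x) / (1 + x)| ≤ 1 := by
  have h : 0 ≤ 1 - x := by linarith
  rw [abs_of_nonneg (by positivity), div_le_one (by positivity)]; linarith

/-! ### Dilogarithm equations -/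

/-- Landen's dilogarithm equation. -/
lemma landen_neg {b : ℝ} (hb : 0 < b) (hb2 : b < 1 / 2) :
    P 2 (-(b / (1 - b))) = -P 2 b - 1 / 2 * Real.log (1 - b) ^ 2 := by
  refine eq_of_deriv (F := fun x => P 2 (-(x / (1 - x))))
    (R := fun x => -P 2 x - 1 / 2 * Real.log (1 - x) ^ 2) hb ?_ ?_ ?_
    (fun x hx => P_comp 1 (d_g3 (by linarith [hx.2])) (abs_g3 hx.1.le (by linarith [hx.2])) ?_)
    (fun x hx => (P_hasDerivAt 1 (abs_lt.2 ⟨by linarith [hx.1], by linarith [hx.2]⟩)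
      hx.1.ne').neg.sub (((dlog_sub (by linarith [hx.2])).pow 2).const_mul (1 / 2))) ?_
  · exact P_comp_continuousOn le_rfl
      (fun x hx => (d_g3 (by linarith [hx.2])).continuousAt.continuousWithinAt)
      fun x hx => (abs_g3 hx.1 (by linarith [hx.2])).le
  · refine ((P_continuousOn le_rfl).mono fun x hx => show |x| ≤ 1 from ?_).neg.sub fun x hx =>
      (((dlog_sub (by linarith [hx.2])).pow 2).const_mul (1 / 2)).continuousAt.continuousWithinAt
    exact abs_le.2 ⟨by linarith [hx.1, hx.2], by linarith [hx.1, hx.2]⟩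
  · simp [P_zero]
  · have := hx.1
    have : 0 < 1 - x := by linarith [hx.2]
    have : 0 < x / (1 - x) := by positivity
    linarith
  · intro x hx
    have hx0 := hx.1
    have h : 0 < 1 - x := by linarith [hx.2]
    rw [P_one_left (abs_g3 hx.1.le (by linarith [hx.2])),
      P_one_left (abs_lt.2 ⟨by linarith [hx.1], by linarith [hx.2]⟩),
      show 1 - -(x / (1 - x)) = (1 - x)⁻¹ by field_simp; ring, Real.log_inv]
    field_simp
    ring

/-- Landen's dilogarithm equation at `-b`. -/
lemma landen_pos {b : ℝ} (hb : 0 < b) (hb2 : b < 1) :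
    P 2 (b / (1 + b)) = -P 2 (-b) - 1 / 2 * Real.log (1 + b) ^ 2 := by
  refine eq_of_deriv (F := fun x => P 2 (x / (1 + x)))
    (R := fun x => -P 2 (-x) - 1 / 2 * Real.log (1 + x) ^ 2) hb ?_ ?_ ?_
    (fun x hx => P_comp 1 (d_g4 (by linarith [hx.1])) (abs_g4 hx.1.le) ?_)
    (fun x hx => (P_comp 1 (hasDerivAt_id x).neg
        (abs_lt.2 ⟨by simp; linarith [hx.2], by simp; linarith [hx.1]⟩)
      (by simpa using hx.1.ne')).neg.sub
        (((dlog_add (by linarith [hx.1])).pow 2).const_mul (1 / 2))) ?_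
  · exact P_comp_continuousOn le_rfl
      (fun x hx => (d_g4 (by linarith [hx.1])).continuousAt.continuousWithinAt)
      fun x hx => (abs_g4 hx.1).le
  · refine (P_comp_continuousOn le_rfl (by fun_prop) fun x hx => ?_).neg.sub fun x hx =>
      (((dlog_add (by linarith [hx.1])).pow 2).const_mul (1 / 2)).continuousAt.continuousWithinAt
    exact abs_le.2 ⟨by linarith [hx.1, hx.2], by linarith [hx.1, hx.2]⟩
  · simp [P_zero]
  · have := hx.1
    positivity
  · intro x hx
    have hx0 := hx.1
    simp only [id, Pi.neg_apply]
    rw [P_one_left (abs_g4 hx.1.le),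
      P_one_left (abs_lt.2 ⟨by linarith [hx.2], by linarith [hx.1]⟩),
      show 1 - x / (1 + x) = (1 + x)⁻¹ by field_simp; ring, Real.log_inv, sub_neg_eq_add]
    field_simp
    ring

/-- Euler's reflection formula for the dilogarithm. -/
lemma euler_reflection {b : ℝ} (hb : 0 < b) (hb2 : b < 1) :
    P 2 b + P 2 (1 - b) = Real.pi ^ 2 / 6 - Real.log b * Real.log (1 - b) := by
  refine eq_of_deriv (F := fun x => P 2 x + P 2 (1 - x))
    (R := fun x => Real.pi ^ 2 / 6 - Real.log x * Real.log (1 - x)) hb ?_ ?_ ?_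
    (fun x hx => (P_hasDerivAt 1 (abs_lt.2 ⟨by linarith [hx.1], by linarith [hx.2]⟩)
      hx.1.ne').add (P_comp 1 ((hasDerivAt_id x).const_sub 1)
        (abs_lt.2 ⟨by simp; linarith [hx.2], by simp; linarith [hx.1]⟩)
        (by simp; linarith [hx.2])))
    (fun x hx => ((dlog hx.1).mul (dlog_sub (by linarith [hx.2]))).const_sub _) ?_
  · refine ((P_continuousOn le_rfl).mono fun x hx => show |x| ≤ 1 from ?_).add
      (P_comp_continuousOn le_rfl (by fun_prop) fun x hx => ?_)
    · exact abs_le.2 ⟨by linarith [hx.1, hx.2], by linarith [hx.1, hx.2]⟩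
    · exact abs_le.2 ⟨by linarith [hx.1, hx.2], by linarith [hx.1, hx.2]⟩
  · exact continuousOn_const.sub (log_mul_continuousOn (by simp) fun x hx =>
      (dlog_sub (by linarith [hx.2])).differentiableAt)
  · simp [P_zero, P_two_one]
  · intro x hx
    have hx0 := hx.1
    have h : 0 < 1 - x := by linarith [hx.2]
    rw [P_one_left (abs_lt.2 ⟨by linarith [hx.1], by linarith [hx.2]⟩),
      P_one_left (abs_lt.2 ⟨by linarith [hx.2], by linarith [hx.1]⟩), sub_sub_cancel]
    field_simp
    ring

/-- The reflection `x ↦ (1 - x) / (1 + x)` for Legendre's chi function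
`χ₂(x) = (Li₂(x) - Li₂(-x)) / 2`, multiplied by `2`. -/
lemma chi_reflection {b : ℝ} (hb : 0 < b) (hb2 : b < 1) :
    P 2 b - P 2 (-b) + (P 2 ((1 - b) / (1 + b)) - P 2 (-((1 - b) / (1 + b)))) =
      Real.pi ^ 2 / 4 + Real.log b * (Real.log (1 + b) - Real.log (1 - b)) := by
  refine eq_of_deriv
    (F := fun x => P 2 x - P 2 (-x) + (P 2 ((1 - x) / (1 + x)) - P 2 (-((1 - x) / (1 + x)))))
    (R := fun x => Real.pi ^ 2 / 4 + Real.log x * (Real.log (1 + x) - Real.log (1 - x)))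
    hb ?_ ?_ ?_
    (fun x hx => ((P_hasDerivAt 1 (abs_lt.2 ⟨by linarith [hx.1], by linarith [hx.2]⟩)
      hx.1.ne').sub (P_comp 1 (hasDerivAt_id x).neg
        (abs_lt.2 ⟨by simp; linarith [hx.2], by simp; linarith [hx.1]⟩)
        (by simpa using hx.1.ne'))).add
      ((P_comp 1 (d_g1 (by linarith [hx.1])) (abs_g1 hx.1 (by linarith [hx.2])) ?_).sub
       (P_comp 1 (d_g1 (by linarith [hx.1])).neg (by
          simpa [abs_neg] using abs_g1 hx.1 (by linarith [hx.2])) ?_)))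
    (fun x hx => ((dlog hx.1).mul ((dlog_add (by linarith [hx.1])).sub
      (dlog_sub (by linarith [hx.2])))).const_add _) ?_
  · have hg : ContinuousOn (fun x : ℝ => (1 - x) / (1 + x)) (Icc 0 b) := fun x hx =>
      (d_g1 (by linarith [hx.1])).continuousAt.continuousWithinAt
    have hle : ∀ x ∈ Icc 0 b, |(1 - x) / (1 + x)| ≤ 1 := fun x hx =>
      abs_g1_le hx.1 (by linarith [hx.2])
    refine (((P_continuousOn le_rfl).mono fun x hx => show |x| ≤ 1 from ?_).sub
      (P_comp_continuousOn le_rfl (by fun_prop) fun x hx => ?_)).add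
      ((P_comp_continuousOn le_rfl hg hle).sub (P_comp_continuousOn le_rfl hg.neg fun x hx => ?_))
    · exact abs_le.2 ⟨by linarith [hx.1, hx.2], by linarith [hx.1, hx.2]⟩
    · exact abs_le.2 ⟨by linarith [hx.1, hx.2], by linarith [hx.1, hx.2]⟩
    · simpa [abs_neg] using hle x hx
  · exact continuousOn_const.add (log_mul_continuousOn (by simp) fun x hx =>
      ((dlog_add (by linarith [hx.1])).sub (dlog_sub (by linarith [hx.2]))).differentiableAt)
  · simp [P_zero, P_two_one, P_two_neg_one]; ring
  · have := hx.1
    have : 0 < 1 - x := by linarith [hx.2]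
    positivity
  · have := hx.1
    have : 0 < 1 - x := by linarith [hx.2]
    have : 0 < (1 - x) / (1 + x) := by positivity
    linarith
  · intro x hx
    have hx0 := hx.1
    have h : 0 < 1 - x := by linarith [hx.2]
    have hg := abs_g1 hx.1 (by linarith [hx.2])
    simp only [id, Pi.neg_apply, Pi.sub_apply]
    rw [P_one_left (abs_lt.2 ⟨by linarith [hx.1], by linarith [hx.2]⟩),
      P_one_left (abs_lt.2 ⟨by linarith [hx.2], by linarith [hx.1]⟩), sub_neg_eq_add,
      P_one_left hg, P_one_left (by rwa [abs_neg]),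
      show 1 - (1 - x) / (1 + x) = 2 * x / (1 + x) by field_simp; ring,
      show 1 - -((1 - x) / (1 + x)) = 2 / (1 + x) by field_simp; ring,
      Real.log_div (by positivity) (by positivity), Real.log_div (by positivity) (by positivity),
      Real.log_mul (by positivity) (by positivity)]
    field_simp
    ring

/-! ### Trilogarithm equations -/

/-- Landen's trilogarithm equation. -/
lemma trilog_landen {b : ℝ} (hb : 0 < b) (hb2 : b ≤ 1 / 2) :
    P 3 b + P 3 (1 - b) + P 3 (-(b / (1 - b))) =
      zeta3 + Real.pi ^ 2 / 6 * Real.log (1 - b) - 1 / 2 * (Real.log b * Real.log (1 - b) ^ 2)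
        + 1 / 6 * Real.log (1 - b) ^ 3 := by
  have hl : ∀ x ∈ Icc 0 b, HasDerivAt (fun y => Real.log (1 - y)) (-1 / (1 - x)) x :=
    fun x hx => dlog_sub (by linarith [hx.2])
  have hlc : ContinuousOn (fun y => Real.log (1 - y)) (Icc 0 b) := fun x hx =>
    (hl x hx).continuousAt.continuousWithinAt
  refine eq_of_deriv
    (F := fun x => P 3 x + P 3 (1 - x) + P 3 (-(x / (1 - x))))
    (R := fun x => zeta3 + Real.pi ^ 2 / 6 * Real.log (1 - x)
        - 1 / 2 * (Real.log x * Real.log (1 - x) ^ 2) + 1 / 6 * Real.log (1 - x) ^ 3) hb ?_ ?_ ?_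
    (fun x hx => ((P_hasDerivAt 2 (abs_lt.2 ⟨by linarith [hx.1], by linarith [hx.2]⟩)
      hx.1.ne').add (P_comp 2 ((hasDerivAt_id x).const_sub 1)
        (abs_lt.2 ⟨by simp; linarith [hx.2], by simp; linarith [hx.1]⟩)
        (by simp; linarith [hx.2]))).add
        (P_comp 2 (d_g3 (by linarith [hx.2])) (abs_g3 hx.1.le (by linarith [hx.2])) ?_))
    (fun x hx => (((hl x ⟨hx.1.le, hx.2.le⟩).const_mul _).const_add _ |>.sub
      (((dlog hx.1).mul ((hl x ⟨hx.1.le, hx.2.le⟩).pow 2)).const_mul _)).add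
      (((hl x ⟨hx.1.le, hx.2.le⟩).pow 3).const_mul _)) ?_
  · refine (((P_continuousOn (by norm_num)).mono fun x hx => show |x| ≤ 1 from ?_).add
      (P_comp_continuousOn (by norm_num) (by fun_prop) fun x hx => ?_)).add
      (P_comp_continuousOn (by norm_num)
      (fun x hx => (d_g3 (by linarith [hx.2])).continuousAt.continuousWithinAt)
      fun x hx => abs_g3_le hx.1 (by linarith [hx.2]))
    · exact abs_le.2 ⟨by linarith [hx.1, hx.2], by linarith [hx.1, hx.2]⟩
    · exact abs_le.2 ⟨by linarith [hx.1, hx.2], by linarith [hx.1, hx.2]⟩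
  · exact ((continuousOn_const.add (continuousOn_const.mul hlc)).sub
      (continuousOn_const.mul (log_mul_continuousOn (u := fun x => Real.log (1 - x) ^ 2) (by simp)
        fun x hx => ((hl x hx).pow 2).differentiableAt))).add (continuousOn_const.mul (hlc.pow 3))
  · simp [P_zero, P_three_one]
  · have := hx.1
    have : 0 < 1 - x := by linarith [hx.2]
    have : 0 < x / (1 - x) := by positivity
    linarith
  · intro x hx
    have hx0 := hx.1
    have h : 0 < 1 - x := by linarith [hx.2]
    simp only [id, Pi.pow_apply]
    rw [landen_neg hx.1 (by linarith [hx.2]),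
      eq_sub_of_add_eq' (euler_reflection hx.1 (by linarith [hx.2]))]
    field_simp
    ring

lemma P_three_half :
    P 3 (1 / 2) = 7 / 8 * zeta3 - Real.pi ^ 2 / 12 * Real.log 2 + Real.log 2 ^ 3 / 6 := by
  have h := trilog_landen (b := 1 / 2) (by norm_num) le_rfl
  have hl : Real.log (1 / 2) = -Real.log 2 := by rw [one_div, Real.log_inv]
  rw [show (1 : ℝ) - 1 / 2 = 1 / 2 by norm_num, div_self (by norm_num), P_three_neg_one, hl] at h
  linarith

/-- A one-variable specialisation of the Spence–Kummer trilogarithm equation. -/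
lemma trilog_kummer {b : ℝ} (hb : 0 < b) (hb2 : b < 1 / 2) :
    P 3 ((1 - b) / (1 + b)) - P 3 (-((1 - b) / (1 + b))) + 2 * P 3 (-(b / (1 - b)))
        + 2 * P 3 (b / (1 + b)) - 1 / 2 * P 3 (-(b ^ 2 / (1 - b ^ 2))) =
      7 / 4 * zeta3 - Real.pi ^ 2 / 4 * (Real.log (1 + b) - Real.log (1 - b))
        - 1 / 2 * (Real.log b * (Real.log (1 + b) - Real.log (1 - b)) ^ 2)
        + 1 / 4 * ((Real.log (1 + b) - Real.log (1 - b)) ^ 2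
          * (Real.log (1 + b) + Real.log (1 - b))) := by
  have hm : ∀ x ∈ Icc 0 b, HasDerivAt (fun y => Real.log (1 - y)) (-1 / (1 - x)) x :=
    fun x hx => dlog_sub (by linarith [hx.2])
  have hp : ∀ x ∈ Icc 0 b, HasDerivAt (fun y => Real.log (1 + y)) (1 / (1 + x)) x :=
    fun x hx => dlog_add (by linarith [hx.1])
  have hL : ∀ x ∈ Icc 0 b, HasDerivAt (fun y => Real.log (1 + y) - Real.log (1 - y))
      (1 / (1 + x) - -1 / (1 - x)) x := fun x hx => (hp x hx).sub (hm x hx)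
  have hS : ∀ x ∈ Icc 0 b, HasDerivAt (fun y => Real.log (1 + y) + Real.log (1 - y))
      (1 / (1 + x) + -1 / (1 - x)) x := fun x hx => (hp x hx).add (hm x hx)
  have hLc : ContinuousOn (fun y => Real.log (1 + y) - Real.log (1 - y)) (Icc 0 b) := fun x hx =>
    (hL x hx).continuousAt.continuousWithinAt
  have hSc : ContinuousOn (fun y => Real.log (1 + y) + Real.log (1 - y)) (Icc 0 b) := fun x hx =>
    (hS x hx).continuousAt.continuousWithinAt
  have hsq : ∀ x ∈ Icc 0 b, x ^ 2 < 1 / 2 := fun x hx => by nlinarith [hx.1, hx.2]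
  have d5 : ∀ x ∈ Icc 0 b, HasDerivAt (fun y : ℝ => -(y ^ 2 / (1 - y ^ 2)))
      (-(1 / (1 - x ^ 2) ^ 2) * (2 * x)) x := fun x hx => by
    have := (d_g3 (x := x ^ 2) (by linarith [hsq x hx])).comp x (hasDerivAt_pow 2 x)
    exact this.congr_deriv (by simp)
  have h1 : ∀ x ∈ Icc 0 b, HasDerivAt (fun y : ℝ => (1 - y) / (1 + y)) (-(2 / (1 + x) ^ 2)) x :=
    fun x hx => d_g1 (by linarith [hx.1])
  have hc1 : ContinuousOn (fun y : ℝ => (1 - y) / (1 + y)) (Icc 0 b) := fun x hx =>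
    (h1 x hx).continuousAt.continuousWithinAt
  have hle1 : ∀ x ∈ Icc 0 b, |(1 - x) / (1 + x)| ≤ 1 := fun x hx =>
    abs_g1_le hx.1 (by linarith [hx.2])
  refine eq_of_deriv
    (F := fun x => P 3 ((1 - x) / (1 + x)) - P 3 (-((1 - x) / (1 + x))) + 2 * P 3 (-(x / (1 - x)))
        + 2 * P 3 (x / (1 + x)) - 1 / 2 * P 3 (-(x ^ 2 / (1 - x ^ 2))))
    (R := fun x => 7 / 4 * zeta3 - Real.pi ^ 2 / 4 * (Real.log (1 + x) - Real.log (1 - x))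
        - 1 / 2 * (Real.log x * (Real.log (1 + x) - Real.log (1 - x)) ^ 2)
        + 1 / 4 * ((Real.log (1 + x) - Real.log (1 - x)) ^ 2
          * (Real.log (1 + x) + Real.log (1 - x)))) hb ?_ ?_ ?_
    (fun x hx => have hx' := Ioo_subset_Icc_self hx
      ((((P_comp 2 (h1 x hx') (abs_g1 hx.1 (by linarith [hx.2])) ?_).sub
       (P_comp 2 (h1 x hx').neg (by
          simpa [abs_neg] using abs_g1 hx.1 (by linarith [hx.2])) ?_)).add
        ((P_comp 2 (d_g3 (by linarith [hx.2])) (abs_g3 hx.1.le (by linarith [hx.2])) ?_).const_mul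
          2)).add
        ((P_comp 2 (d_g4 (by linarith [hx.1])) (abs_g4 hx.1.le) ?_).const_mul 2)).sub
        ((P_comp 2 (d5 x hx') (abs_g3 (sq_nonneg x) (hsq x hx')) ?_).const_mul (1 / 2)))
    (fun x hx => have hx' := Ioo_subset_Icc_self hx
      ((((hL x hx').const_mul _).const_sub _).sub
        (((dlog hx.1).mul ((hL x hx').pow 2)).const_mul _)).add
        ((((hL x hx').pow 2).mul (hS x hx')).const_mul _)) ?_
  · exact ((((P_comp_continuousOn (by norm_num) hc1 hle1).sub
      (P_comp_continuousOn (by norm_num) hc1.neg fun x hx => by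
        simpa [abs_neg] using hle1 x hx)).add
      (continuousOn_const.mul (P_comp_continuousOn (by norm_num)
        (fun x hx => (d_g3 (by linarith [hx.2])).continuousAt.continuousWithinAt)
        fun x hx => (abs_g3 hx.1 (by linarith [hx.2])).le))).add
      (continuousOn_const.mul (P_comp_continuousOn (by norm_num)
        (fun x hx => (d_g4 (by linarith [hx.1])).continuousAt.continuousWithinAt)
        fun x hx => (abs_g4 hx.1).le))).sub
      (continuousOn_const.mul (P_comp_continuousOn (by norm_num)
        (fun x hx => (d5 x hx).continuousAt.continuousWithinAt)
        fun x hx => (abs_g3 (sq_nonneg x) (hsq x hx)).le))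
  · exact ((continuousOn_const.sub (continuousOn_const.mul hLc)).sub
      (continuousOn_const.mul (log_mul_continuousOn
        (u := fun x => (Real.log (1 + x) - Real.log (1 - x)) ^ 2) (by simp)
        fun x hx => ((hL x hx).pow 2).differentiableAt))).add
      (continuousOn_const.mul ((hLc.pow 2).mul hSc))
  · simp [P_zero, P_three_one, P_three_neg_one]; ring
  · have := hx.1
    have : 0 < 1 - x := by linarith [hx.2]
    positivity
  · have := hx.1
    have : 0 < 1 - x := by linarith [hx.2]
    have : 0 < (1 - x) / (1 + x) := by positivity
    simp only [Pi.neg_apply]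
    linarith
  · have := hx.1
    have : 0 < 1 - x := by linarith [hx.2]
    have : 0 < x / (1 - x) := by positivity
    linarith
  · have := hx.1
    positivity
  · have := hx.1
    have : 0 < 1 - x ^ 2 := by linarith [hsq x hx']
    have : 0 < x ^ 2 / (1 - x ^ 2) := by positivity
    linarith
  · intro x hx
    have hx0 := hx.1
    have h : 0 < 1 - x := by linarith [hx.2]
    have h2 := hsq x (Ioo_subset_Icc_self hx)
    have e1 := chi_reflection hx.1 (by linarith [hx.2])
    have e2 := P_dup (n := 2) le_rfl (x := x) (abs_le.2 ⟨by linarith, by linarith⟩)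
    have hlog : Real.log (1 - x ^ 2) = Real.log (1 + x) + Real.log (1 - x) := by
      rw [← Real.log_mul (by positivity) h.ne']; congr 1; ring
    simp only [Pi.neg_apply, Pi.pow_apply]
    rw [landen_neg hx.1 (by linarith [hx.2]), landen_pos hx.1 (by linarith [hx.2]),
      landen_neg (pow_pos hx.1 2) h2, hlog,
      show P 2 (x ^ 2) = 2 * (P 2 x + P 2 (-x)) by rw [e2]; ring,
      show P 2 ((1 - x) / (1 + x)) = P 2 (-((1 - x) / (1 + x))) + (Real.pi ^ 2 / 4
        + Real.log x * (Real.log (1 + x) - Real.log (1 - x)) - P 2 x + P 2 (-x)) by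
          linarith]
    -- the remaining value of `Li₂` cancels; naming it keeps `field_simp` out of its argument
    generalize P 2 (-((1 - x) / (1 + x))) = c
    rw [show (1 : ℝ) - x ^ 2 = (1 - x) * (1 + x) by ring]
    field_simp
    ring

/-! ### The ladder -/

theorem trilog_ladder_C :
    (4 / 9) * (Li 3 (I / (Real.sqrt 8 : ℂ))).re - 8 * (Li 3 (-I / (Real.sqrt 2 : ℂ))).re =
      (49 / 72) * zeta3 + Real.log 2 ^ 3 / 12 - Real.pi ^ 2 * Real.log 2 / 18 := by
  have s8 : ((Real.sqrt 8 : ℝ) : ℂ) ^ 2 = 8 := by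
    rw [← Complex.ofReal_pow, Real.sq_sqrt (by norm_num)]; norm_num
  have s2 : ((Real.sqrt 2 : ℝ) : ℂ) ^ 2 = 2 := by
    rw [← Complex.ofReal_pow, Real.sq_sqrt (by norm_num)]; norm_num
  rw [Li_re (t := 1 / 8) (by rw [div_pow, s8, I_sq]; push_cast; ring) (by simp) ?_
      (by norm_num [abs_le]),
    Li_re (t := 1 / 2) (by rw [div_pow, s2, neg_sq, I_sq]; push_cast; ring) (by simp) ?_
      (by norm_num [abs_le])]
  · have h := trilog_kummer (b := 1 / 3) (by norm_num) (by norm_num)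
    have hd := P_dup (n := 3) (by norm_num) (x := 1 / 2) (by norm_num [abs_le])
    have l1 : Real.log (1 + 1 / 3) = 2 * Real.log 2 - Real.log 3 := by
      rw [show (1 : ℝ) + 1 / 3 = 2 ^ 2 / 3 by norm_num, Real.log_div (by norm_num) (by norm_num),
        Real.log_pow]; norm_num
    have l2 : Real.log (1 - 1 / 3) = Real.log 2 - Real.log 3 := by
      rw [show (1 : ℝ) - 1 / 3 = 2 / 3 by norm_num, Real.log_div (by norm_num) (by norm_num)]
    have l3 : Real.log (1 / 3) = -Real.log 3 := by rw [one_div, Real.log_inv]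
    rw [l1, l2, l3,
      show ((1 : ℝ) - 1 / 3) / (1 + 1 / 3) = 1 / 2 by norm_num,
      show (1 : ℝ) / 3 / (1 - 1 / 3) = 1 / 2 by norm_num,
      show (1 : ℝ) / 3 / (1 + 1 / 3) = 1 / 4 by norm_num,
      show ((1 : ℝ) / 3) ^ 2 / (1 - (1 / 3) ^ 2) = 1 / 8 by norm_num] at h
    rw [show ((1 : ℝ) / 2) ^ 2 = 1 / 4 by norm_num] at hd
    have h3 := P_three_half
    linear_combination (-1 / 9) * h - (8 / 9) * hd + h3
  · rw [norm_div, norm_neg, norm_I, Complex.norm_real, Real.norm_of_nonneg (Real.sqrt_nonneg _)]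
    exact div_le_one_of_le₀ (Real.one_le_sqrt.2 (by norm_num)) (Real.sqrt_nonneg _)
  · rw [norm_div, norm_I, Complex.norm_real, Real.norm_of_nonneg (Real.sqrt_nonneg _)]
    exact div_le_one_of_le₀ (Real.one_le_sqrt.2 (by norm_num)) (Real.sqrt_nonneg _)
end
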